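/- Let G1 and G2 be finite simple graphs, each with at least one vertex. Then car(G1 ∪ G2) = max{car(G1), car(G2)}, where G1 ∪ G2 denotes the disjoint union of G1 and G2. -/

import Mathlib

open SimpleGraph

/-- A set `S` is cycle convex in `G` if no vertex `w` outside `S` is such that the
subgraph induced by `S ∪ {w}` contains a cycle through `w`. -/
def IsCycleConvex {V : Type*} (G : SimpleGraph V) (S : Set V) : Prop :=
  ∀ w : V, w ∉ S →
    ¬ ∃ c : (G.induce (S ∪ {w})).Walk ⟨w, Set.mem_union_right S rfl⟩
        ⟨w, Set.mem_union_right S rfl⟩, c.IsCycle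

/-- The cycle convex hull of `S`: the smallest cycle convex set containing `S`. -/
def cycleHull {V : Type*} (G : SimpleGraph V) (S : Set V) : Set V :=
  ⋂₀ {T : Set V | S ⊆ T ∧ IsCycleConvex G T}

/-- `S` is Carathéodory independent in the cycle convexity of `G`. -/
def CIndep {V : Type*} (G : SimpleGraph V) (S : Set V) : Prop :=
  ∃ p ∈ cycleHull G S, ∀ a ∈ S, p ∉ cycleHull G (S \ {a})

/-- The Carathéodory number of `G` in the cycle convexity. -/
noncomputable def carNumber {V : Type*} (G : SimpleGraph V) : ℕ :=
  sSup {n : ℕ | ∃ S : Set V, CIndep G S ∧ S.ncard = n}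

/-!
A cycle of a graph never leaves its connected component. Hence, if `f` embeds `G` as a union of
components of `K`, forming hulls commutes with taking preimages under `f`. Deleting a vertex of `S`
outside the range of `f` then leaves the trace of the hull on that range unchanged, so an
independent set whose witness is `f q` lies entirely in the range of `f`. In a disjoint union,
every independent set is therefore contained in one of the two factors.
-/

/-- The property of a vertex `p` that makes `S` Carathéodory independent: it lies in the hull of
`S`, but in the hull of no `S \ {a}` with `a ∈ S`. -/
def IsCaratheodoryWitness {V : Type*} (G : SimpleGraph V) (S : Set V) (p : V) : Prop :=
  p ∈ cycleHull G S ∧ ∀ a ∈ S, p ∉ cycleHull G (S \ {a})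

/-- The set of sizes of Carathéodory independent sets of `G`, whose supremum is `carNumber G`. -/
def cIndepCards {V : Type*} (G : SimpleGraph V) : Set ℕ :=
  {n | ∃ S : Set V, CIndep G S ∧ S.ncard = n}

/-- The graph embedding `f` identifies `G` with a union of connected components of `K`, expressed
by closedness of the range of `f` under adjacency. -/
def IsComponentEmbedding {V W : Type*} {G : SimpleGraph V} {K : SimpleGraph W}
    (f : G ↪g K) : Prop :=
  ∀ ⦃u y⦄, K.Adj (f u) y → y ∈ Set.range f

section Hull

variable {V : Type*} {G : SimpleGraph V} {S T : Set V}

theorem isCycleConvex_iff_forall_isCycle :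
    IsCycleConvex G S ↔
      ∀ ⦃w⦄ (c : G.Walk w w), c.IsCycle → (∀ v ∈ c.support, v ∈ S ∪ {w}) → w ∈ S := by
  constructor
  · intro hS w c hc hsupp
    by_contra hw
    refine hS w hw ⟨c.induce _ hsupp, .of_map (f := (Embedding.induce (S ∪ {w})).toHom) ?_⟩
    exact (c.map_induce hsupp).symm ▸ hc
  · rintro hS w hw ⟨c, hc⟩
    refine hw (hS (c.map (Embedding.induce (S ∪ {w})).toHom) (hc.map Subtype.val_injective) ?_)
    intro v hv
    obtain ⟨x, -, rfl⟩ := List.mem_map.1 (Walk.support_map _ c ▸ hv)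
    exact x.2

theorem subset_cycleHull : S ⊆ cycleHull G S :=
  Set.subset_sInter fun _ hT => hT.1

theorem cycleHull_subset (hT : IsCycleConvex G T) (hST : S ⊆ T) : cycleHull G S ⊆ T :=
  Set.sInter_subset_of_mem ⟨hST, hT⟩

theorem isCycleConvex_sInter {𝒯 : Set (Set V)} (h𝒯 : ∀ T ∈ 𝒯, IsCycleConvex G T) :
    IsCycleConvex G (⋂₀ 𝒯) := by
  rw [isCycleConvex_iff_forall_isCycle]
  intro w c hc hsupp T hT
  exact isCycleConvex_iff_forall_isCycle.1 (h𝒯 T hT) c hc fun v hv =>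
    (hsupp v hv).imp_left fun hv => hv T hT

theorem isCycleConvex_cycleHull : IsCycleConvex G (cycleHull G S) :=
  isCycleConvex_sInter fun _ hT => hT.2

end Hull

theorem IsCycleConvex.preimage {V W : Type*} {G : SimpleGraph V} {K : SimpleGraph W} {T : Set W}
    (hT : IsCycleConvex K T) (f : G →g K) (hf : Function.Injective f) :
    IsCycleConvex G (f ⁻¹' T) := by
  rw [isCycleConvex_iff_forall_isCycle] at hT ⊢
  intro w c hc hsupp
  refine hT (c.map f) (hc.map hf) ?_
  rw [Walk.support_map, List.forall_mem_map]
  exact fun v hv => (hsupp v hv).imp_right (congrArg f)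

namespace IsComponentEmbedding

variable {V W : Type*} {G : SimpleGraph V} {K : SimpleGraph W} {f : G ↪g K}

theorem exists_walk_map_eq_copy (hf : IsComponentEmbedding f) {x y : W} (c : K.Walk x y) :
    ∀ {u v : V} (hu : x = f u) (hv : y = f v),
      ∃ c' : G.Walk u v, c'.map f.toHom = c.copy hu hv := by
  induction c with
  | nil =>
    rintro u v rfl huv
    obtain rfl := f.injective huv
    exact ⟨.nil, rfl⟩
  | cons hadj c ih =>
    rintro u v rfl rfl
    obtain ⟨z, rfl⟩ := hf hadj
    obtain ⟨c', hc'⟩ := ih rfl rfl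
    exact ⟨.cons (f.map_adj_iff.1 hadj) c', congrArg (Walk.cons hadj) hc'⟩

theorem isCycleConvex_kernImage (hf : IsComponentEmbedding f) {T : Set V}
    (hT : IsCycleConvex G T) : IsCycleConvex K (Set.kernImage f T) := by
  rw [isCycleConvex_iff_forall_isCycle] at hT ⊢
  rintro _ c hc hsupp w rfl
  obtain ⟨c, rfl⟩ := hf.exists_walk_map_eq_copy c rfl rfl
  refine hT c (.of_map hc) fun v hv => ?_
  have hfv : f v ∈ (c.map f.toHom).support := by
    rw [Walk.support_map]
    exact List.mem_map_of_mem hv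
  exact (hsupp (f v) hfv).imp (fun h => h rfl) (fun h => f.injective h)

theorem preimage_cycleHull (hf : IsComponentEmbedding f) (S : Set W) :
    f ⁻¹' cycleHull K S = cycleHull G (f ⁻¹' S) := by
  apply Set.Subset.antisymm
  · rw [← Set.subset_kernImage_iff]
    exact cycleHull_subset (hf.isCycleConvex_kernImage isCycleConvex_cycleHull)
      (Set.subset_kernImage_iff.2 subset_cycleHull)
  · exact cycleHull_subset (isCycleConvex_cycleHull.preimage f.toHom f.injective)
      (Set.preimage_mono subset_cycleHull)

theorem apply_mem_cycleHull_iff (hf : IsComponentEmbedding f) {S : Set W} {q : V} :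
    f q ∈ cycleHull K S ↔ q ∈ cycleHull G (f ⁻¹' S) := by
  rw [← hf.preimage_cycleHull, Set.mem_preimage]

theorem isCaratheodoryWitness_image_iff (hf : IsComponentEmbedding f) {T : Set V} {q : V} :
    IsCaratheodoryWitness K (f '' T) (f q) ↔ IsCaratheodoryWitness G T q := by
  simp only [IsCaratheodoryWitness, Set.forall_mem_image, hf.apply_mem_cycleHull_iff,
    Set.preimage_sdiff, Set.preimage_image_eq _ f.injective, ← Set.image_singleton]

theorem subset_range_of_isCaratheodoryWitness (hf : IsComponentEmbedding f) {S : Set W} {q : V}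
    (hq : IsCaratheodoryWitness K S (f q)) : S ⊆ Set.range f := by
  intro a ha
  by_contra ha_range
  have hpreimage : f ⁻¹' (S \ {a}) = f ⁻¹' S := by
    rw [Set.preimage_sdiff, Set.preimage_singleton_eq_empty.2 ha_range, Set.sdiff_empty]
  refine hq.2 a ha (hf.apply_mem_cycleHull_iff.2 ?_)
  rw [hpreimage]
  exact hf.apply_mem_cycleHull_iff.1 hq.1

theorem exists_isCaratheodoryWitness_apply_iff (hf : IsComponentEmbedding f) {S : Set W} :
    (∃ q, IsCaratheodoryWitness K S (f q)) ↔ ∃ T, CIndep G T ∧ f '' T = S := by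
  constructor
  · rintro ⟨q, hq⟩
    obtain ⟨T, rfl⟩ := Set.subset_range_iff_exists_image_eq.1
      (hf.subset_range_of_isCaratheodoryWitness hq)
    exact ⟨T, ⟨q, hf.isCaratheodoryWitness_image_iff.1 hq⟩, rfl⟩
  · rintro ⟨T, ⟨q, hq⟩, rfl⟩
    exact ⟨q, hf.isCaratheodoryWitness_image_iff.2 hq⟩

end IsComponentEmbedding

section Sum

variable {α β : Type*} {G : SimpleGraph α} {H : SimpleGraph β}

theorem isComponentEmbedding_sumInl :
    IsComponentEmbedding (Embedding.sumInl : G ↪g G ⊕g H) := by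
  rintro u (y | y) h
  · exact ⟨y, rfl⟩
  · exact nomatch h

theorem isComponentEmbedding_sumInr :
    IsComponentEmbedding (Embedding.sumInr : H ↪g G ⊕g H) := by
  rintro u (y | y) h
  · exact nomatch h
  · exact ⟨y, rfl⟩

theorem cIndep_sum_iff {S : Set (α ⊕ β)} :
    CIndep (G ⊕g H) S ↔
      (∃ T, CIndep G T ∧ Sum.inl '' T = S) ∨ ∃ T, CIndep H T ∧ Sum.inr '' T = S :=
  Sum.exists.trans <| or_congr
    isComponentEmbedding_sumInl.exists_isCaratheodoryWitness_apply_iff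
    isComponentEmbedding_sumInr.exists_isCaratheodoryWitness_apply_iff

theorem cIndepCards_sum : cIndepCards (G ⊕g H) = cIndepCards G ∪ cIndepCards H := by
  ext n
  constructor
  · rintro ⟨S, hS, rfl⟩
    rcases cIndep_sum_iff.1 hS with ⟨T, hT, rfl⟩ | ⟨T, hT, rfl⟩
    · exact .inl ⟨T, hT, (Set.ncard_image_of_injective T Sum.inl_injective).symm⟩
    · exact .inr ⟨T, hT, (Set.ncard_image_of_injective T Sum.inr_injective).symm⟩
  · rintro (⟨T, hT, rfl⟩ | ⟨T, hT, rfl⟩)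
    · exact ⟨Sum.inl '' T, cIndep_sum_iff.2 (.inl ⟨T, hT, rfl⟩),
        Set.ncard_image_of_injective T Sum.inl_injective⟩
    · exact ⟨Sum.inr '' T, cIndep_sum_iff.2 (.inr ⟨T, hT, rfl⟩),
        Set.ncard_image_of_injective T Sum.inr_injective⟩

end Sum

theorem bddAbove_cIndepCards {V : Type*} [Finite V] (G : SimpleGraph V) :
    BddAbove (cIndepCards G) := by
  refine ⟨Nat.card V, ?_⟩
  rintro _ ⟨S, -, rfl⟩
  exact Set.ncard_le_card S

theorem stmt_8_general {α β : Type*} (G : SimpleGraph α) (H : SimpleGraph β)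
    (hG : BddAbove (cIndepCards G)) (hH : BddAbove (cIndepCards H)) :
    carNumber (G ⊕g H) = max (carNumber G) (carNumber H) :=
  (congrArg sSup cIndepCards_sum).trans (csSup_union' hG hH)

/-- The Caratheodory number of a disjoint union is the maximum of the
Caratheodory numbers of the two factors. -/
theorem stmt_8 {α β : Type*} [Fintype α] [Fintype β] [Nonempty α] [Nonempty β]
    (G : SimpleGraph α) (H : SimpleGraph β) :
    carNumber (G ⊕g H) = max (carNumber G) (carNumber H) :=
  stmt_8_general G H (bddAbove_cIndepCards G) (bddAbove_cIndepCards H)
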